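/- arXiv:2406.19733 — 6 statements merged into one kernel-verified Lean document; each statement's English description precedes it below -/
import Mathlib

section
/- Let V be an inner product space over ℂ and let H, Θ : V →ₗ[ℂ] V be symmetric linear maps. Suppose η ∈ V and ω ∈ ℂ satisfy Θ (H η) = ω • η. If ω is not real (its imaginary part is nonzero), then ⟪η, H η⟫ = 0 and ⟪H η, Θ (H η)⟫ = 0; that is, the real and imaginary parts of a perturbed eigenmode with non-real squared frequency have vanishing H- and Θ-expectation values. -/
open scoped ComplexInnerProductSpace

/-- Theorem (i) of Section II: if a perturbed eigenmode `η` of the operator `Θ ∘ H`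
has a non-real squared frequency `ω`, then its `H`- and `Θ`-expectation values vanish. -/
theorem nonreal_eigenvalue_vanishing_expectations
    {V : Type*} [NormedAddCommGroup V] [InnerProductSpace ℂ V]
    (H Θ : V →ₗ[ℂ] V) (hH : H.IsSymmetric) (hΘ : Θ.IsSymmetric)
    (η : V) (ω : ℂ) (heig : Θ (H η) = ω • η) (hω : ω.im ≠ 0) :
    ⟪η, H η⟫ = 0 ∧ ⟪H η, Θ (H η)⟫ = 0 := by
  -- Evaluating `⟪H η, Θ (H η)⟫` with `Θ` on either side gives both `ω * ⟪η, H η⟫`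
  -- and `conj ω * ⟪η, H η⟫`.
  have h₁ : ⟪H η, Θ (H η)⟫ = ω * ⟪η, H η⟫ := by
    rw [heig, inner_smul_right, hH η η]
  have h₂ : ⟪H η, Θ (H η)⟫ = (starRingEnd ℂ) ω * ⟪η, H η⟫ := by
    rw [← hΘ (H η) (H η), heig, inner_smul_left]
  have h₃ : ⟪η, H η⟫ = 0 := by
    by_contra h
    exact hω (Complex.conj_eq_iff_im.mp (mul_right_cancel₀ h (h₂.symm.trans h₁)))
  exact ⟨h₃, by rw [h₁, h₃, mul_zero]⟩
end

section
/- Let V be an inner product space over ℂ and let H, Θ : V →ₗ[ℂ] V be symmetric linear maps. (a) If the quadratic form of H is positive semidefinite, i.e. 0 ≤ re ⟪f, H f⟫ for all f ∈ V, and Θ (H η) = ω • η for some η ≠ 0 and ω ∈ ℂ, then ω is real. (b) If the quadratic form of Θ is positive semidefinite and H (Θ R) = ω • R for some R ≠ 0 and ω ∈ ℂ, then ω is real. (Contrapositive of Theorem (ii): a non-real eigenvalue of Θ∘H or H∘Θ requires that both H and Θ have indefinite quadratic forms.) -/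
/-!
Both halves are the same fact about symmetric maps `A`, `B` with `A` positive semidefinite.
If `B (A η) = ω • η`, pairing with `A η` gives `⟪A η, B (A η)⟫ = ω * ⟪A η, η⟫`, where
`⟪A η, B (A η)⟫` and `⟪A η, η⟫` are real by symmetry. Hence either `ω` is real or
`⟪A η, η⟫ = 0`. In the latter case semidefiniteness forces `A η = 0`, so `ω • η = 0` and `ω = 0`.
-/


open scoped ComplexInnerProductSpace

/-- A null vector of a semidefinite form lies in the kernel: the real quadratic polynomial
`t ↦ re ⟪x + t A x, A (x + t A x)⟫ = t² re ⟪A x, A (A x)⟫ + 2 t ‖A x‖²` is nonnegative, so its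
discriminant `4 ‖A x‖⁴` is at most zero. -/
lemma apply_eq_zero_of_re_inner_eq_zero
    {V : Type*} [NormedAddCommGroup V] [InnerProductSpace ℂ V]
    {A : V →ₗ[ℂ] V} (hA : A.IsSymmetric) (hpos : ∀ f : V, 0 ≤ (⟪f, A f⟫).re)
    {x : V} (hx : (⟪x, A x⟫).re = 0) : A x = 0 := by
  have hnorm : (⟪A x, A x⟫).re = ‖A x‖ ^ 2 := by
    rw [inner_self_eq_norm_sq_to_K]
    norm_cast
  have key : ∀ t : ℝ, 0 ≤ (⟪A x, A (A x)⟫).re * (t * t) + (2 * ‖A x‖ ^ 2) * t + 0 := by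
    intro t
    have h := hpos (x + (t : ℂ) • A x)
    simp only [map_add, map_smul, inner_add_left, inner_add_right, inner_smul_left,
      inner_smul_right, Complex.conj_ofReal, Complex.add_re, Complex.re_ofReal_mul,
      ← hA x (A x), hx, hnorm] at h
    linarith
  have hd := discrim_le_zero key
  have hz : ‖A x‖ = 0 := by
    have h4 : (‖A x‖ ^ 2) ^ 2 = 0 :=
      le_antisymm (by unfold discrim at hd; linarith) (sq_nonneg _)
    simpa using h4
  exact norm_eq_zero.mp hz

lemma eigenvalue_im_eq_zero_of_comp
    {V : Type*} [NormedAddCommGroup V] [InnerProductSpace ℂ V]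
    {A B : V →ₗ[ℂ] V} (hA : A.IsSymmetric) (hB : B.IsSymmetric)
    (hpos : ∀ f : V, 0 ≤ (⟪f, A f⟫).re)
    {η : V} {ω : ℂ} (hη : η ≠ 0) (h : B (A η) = ω • η) : ω.im = 0 := by
  have hBim : (⟪A η, B (A η)⟫).im = 0 := hB.im_inner_self_apply (A η)
  have hAim : (⟪A η, η⟫).im = 0 := hA.im_inner_apply_self η
  rw [h, inner_smul_right, Complex.mul_im, hAim, mul_zero, zero_add] at hBim
  rcases mul_eq_zero.mp hBim with hω | h0
  · exact hω
  · rw [hA η η] at h0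
    rw [apply_eq_zero_of_re_inner_eq_zero hA hpos h0, map_zero] at h
    have hω : ω = 0 := (smul_eq_zero.mp h.symm).resolve_right hη
    simp [hω]

/-- Contrapositive of Theorem (ii) of Section II: (a) if the quadratic form of the
symmetric operator `H` is positive semidefinite, every eigenvalue of `Θ ∘ H` is real;
(b) if the quadratic form of `Θ` is positive semidefinite, every eigenvalue of
`H ∘ Θ` is real. -/
theorem semidefinite_implies_real_eigenvalue
    {V : Type*} [NormedAddCommGroup V] [InnerProductSpace ℂ V]
    (H Θ : V →ₗ[ℂ] V) (hH : H.IsSymmetric) (hΘ : Θ.IsSymmetric) :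
    ((∀ f : V, 0 ≤ (⟪f, H f⟫).re) →
      ∀ (η : V) (ω : ℂ), η ≠ 0 → Θ (H η) = ω • η → ω.im = 0) ∧
    ((∀ f : V, 0 ≤ (⟪f, Θ f⟫).re) →
      ∀ (R : V) (ω : ℂ), R ≠ 0 → H (Θ R) = ω • R → ω.im = 0) := by
  exact ⟨fun hpos _ _ hη h => eigenvalue_im_eq_zero_of_comp hH hΘ hpos hη h,
    fun hpos _ _ hR h => eigenvalue_im_eq_zero_of_comp hΘ hH hpos hR h⟩
end

section
/- Let V be an inner product space over ℂ, H, Θ : V →ₗ[ℂ] V symmetric linear maps, and m ≥ 1. Suppose η₁, …, η_m ∈ V and real numbers ω₁, …, ω_m satisfy Θ (H η_j) = ω_j • η_j for each j, with ⟪η_i, H η_j⟫ = 0 whenever i ≠ j and 0 ≤ re ⟪η_j, H η_j⟫ for each j. Let a₁, …, a_m ∈ ℂ and η = Σ_j a_j • η_j. If 0 < re ⟪η, H η⟫, then (min_j ω_j) · re ⟪η, H η⟫ ≤ re ⟪H η, Θ (H η)⟫; equivalently the lowest eigenvalue satisfies ω_min ≤ ⟪η, H Θ H η⟫ / ⟪η,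 H η⟫ (Theorem (iii), the variational principle). -/
open scoped ComplexInnerProductSpace

/-!
The form `⟪·, H ·⟫` is diagonal on the span of the `η j`, so `⟪x, H x⟫ = ∑ |a j|² ⟪η j, H (η j)⟫`.
By symmetry of `H`, `⟪H x, Θ (H x)⟫ = ⟪x, H (Θ (H x))⟫`, and `Θ (H x) = ∑ (a j * ω j) • η j`, so this
is the same sum with weights `ω j`. Since every `⟪η j, H (η j)⟫` has nonnegative real part,
replacing each `ω j` by the minimum can only decrease the sum.
-/

/-- The sesquilinear form `⟪·, H ·⟫` is diagonal on combinations of an `H`-orthogonal family. -/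
lemma inner_sum_map_sum_of_orthogonal
    {V : Type*} [NormedAddCommGroup V] [InnerProductSpace ℂ V]
    (H : V →ₗ[ℂ] V) {m : ℕ} (η : Fin m → V)
    (horth : ∀ i j, i ≠ j → ⟪η i, H (η j)⟫ = 0) (a b : Fin m → ℂ) :
    ⟪∑ j, a j • η j, H (∑ j, b j • η j)⟫
      = ∑ j, starRingEnd ℂ (a j) * b j * ⟪η j, H (η j)⟫ := by
  simp only [map_sum, map_smul, sum_inner, inner_sum, inner_smul_left, inner_smul_right]
  refine Finset.sum_congr rfl fun i _ => ?_
  rw [Finset.sum_eq_single i]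
  · ring
  · intro j _ hj
    rw [horth j i hj]
    simp
  · simp

/-- Theorem (iii) of Section II (the variational principle): for eigenmodes
`η j` of `Θ ∘ H` with real eigenvalues `ω j`, mutually `H`-orthogonal and with
nonnegative `H`-expectations, any combination `x = ∑ a j • η j` with positive
`H`-expectation satisfies `ω_min · ⟪x, H x⟫ ≤ ⟪H x, Θ (H x)⟫`. -/
theorem variational_principle_lowest_eigenvalue
    {V : Type*} [NormedAddCommGroup V] [InnerProductSpace ℂ V]
    (H Θ : V →ₗ[ℂ] V) (hH : H.IsSymmetric) (hΘ : Θ.IsSymmetric)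
    {m : ℕ} (hm : 1 ≤ m)
    (η : Fin m → V) (ω : Fin m → ℝ)
    (heig : ∀ j, Θ (H (η j)) = (ω j : ℂ) • η j)
    (horth : ∀ i j, i ≠ j → ⟪η i, H (η j)⟫ = 0)
    (hpos : ∀ j, 0 ≤ (⟪η j, H (η j)⟫).re)
    (a : Fin m → ℂ) (x : V) (hx : x = ∑ j, a j • η j)
    (hxpos : 0 < (⟪x, H x⟫).re) :
    (⨅ j, ω j) * (⟪x, H x⟫).re ≤ (⟪H x, Θ (H x)⟫).re := by
  have hmap : Θ (H x) = ∑ j, (a j * (ω j : ℂ)) • η j := by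
    simp only [hx, map_sum, map_smul, heig, smul_smul]
  have hnum : (⟪H x, Θ (H x)⟫).re
      = ∑ j, ω j * (Complex.normSq (a j) * (⟪η j, H (η j)⟫).re) := by
    rw [hH x (Θ (H x)), hmap, hx, inner_sum_map_sum_of_orthogonal H η horth, Complex.re_sum]
    refine Finset.sum_congr rfl fun j _ => ?_
    rw [← mul_assoc, ← Complex.normSq_eq_conj_mul_self, ← Complex.ofReal_mul,
      Complex.re_ofReal_mul]
    ring
  have hden : (⟪x, H x⟫).re = ∑ j, Complex.normSq (a j) * (⟪η j, H (η j)⟫).re := by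
    rw [hx, inner_sum_map_sum_of_orthogonal H η horth, Complex.re_sum]
    refine Finset.sum_congr rfl fun j _ => ?_
    rw [← Complex.normSq_eq_conj_mul_self, Complex.re_ofReal_mul]
  rw [hnum, hden, Finset.mul_sum]
  refine Finset.sum_le_sum fun j _ => ?_
  exact mul_le_mul_of_nonneg_right (ciInf_le (Set.finite_range ω).bddBelow j)
    (mul_nonneg (Complex.normSq_nonneg _) (hpos j))
end

section
/- Let V be an inner product space over ℂ and let H, Θ : V →ₗ[ℂ] V be symmetric linear maps. (a) If Θ (H η₁) = ω₁ • η₁ and Θ (H η₂) = ω₂ • η₂ for η₁, η₂ ∈ V and ω₁, ω₂ ∈ ℂ, then (ω₁ − conj ω₂) · ⟪η₂, H η₁⟫ = 0. (b) If H (Θ R₁) = ω₁ • R₁ and H (Θ R₂) = ω₂ • R₂, then (ω₁ − conj ω₂) · ⟪R₂, Θ R₁⟫ = 0. In particular, eigenvectors of Θ∘H whose eigenvalues satisfy ω₁ ≠ conj ω₂ are H-orthogonal, and eigenvectors of H∘Θ are Θ-orthogonal (Eq. (8), the 'almost orthogonality' of eigenfunctions). -/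
open scoped ComplexInnerProductSpace

/-- `B ∘ A` is symmetric for the sesquilinear form `⟪·, A ·⟫`: moving it across the form
turns the eigenvalue of the first argument into its conjugate. -/
theorem sub_conj_mul_inner_eq_zero
    {V : Type*} [NormedAddCommGroup V] [InnerProductSpace ℂ V]
    {A B : V →ₗ[ℂ] V} (hA : A.IsSymmetric) (hB : B.IsSymmetric)
    {x y : V} {a b : ℂ} (hx : B (A x) = a • x) (hy : B (A y) = b • y) :
    (a - (starRingEnd ℂ) b) * ⟪y, A x⟫ = 0 := by
  have h : a * ⟪y, A x⟫ = (starRingEnd ℂ) b * ⟪y, A x⟫ := by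
    calc a * ⟪y, A x⟫ = ⟪y, A (B (A x))⟫ := by rw [hx, map_smul, inner_smul_right]
      _ = ⟪B (A y), A x⟫ := by rw [← hA, ← hB]
      _ = (starRingEnd ℂ) b * ⟪y, A x⟫ := by rw [hy, inner_smul_left]
  rw [sub_mul, h, sub_self]

/-- Eq. (8), the 'almost orthogonality' of eigenfunctions: (a) eigenvectors of
`Θ ∘ H` satisfy `(ω₁ − conj ω₂) · ⟪η₂, H η₁⟫ = 0`; (b) eigenvectors of `H ∘ Θ`
satisfy `(ω₁ − conj ω₂) · ⟪R₂, Θ R₁⟫ = 0`. -/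
theorem almost_orthogonality_of_eigenfunctions
    {V : Type*} [NormedAddCommGroup V] [InnerProductSpace ℂ V]
    (H Θ : V →ₗ[ℂ] V) (hH : H.IsSymmetric) (hΘ : Θ.IsSymmetric) :
    (∀ (η₁ η₂ : V) (ω₁ ω₂ : ℂ), Θ (H η₁) = ω₁ • η₁ → Θ (H η₂) = ω₂ • η₂ →
      (ω₁ - (starRingEnd ℂ) ω₂) * ⟪η₂, H η₁⟫ = 0) ∧
    (∀ (R₁ R₂ : V) (ω₁ ω₂ : ℂ), H (Θ R₁) = ω₁ • R₁ → H (Θ R₂) = ω₂ • R₂ →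
      (ω₁ - (starRingEnd ℂ) ω₂) * ⟪R₂, Θ R₁⟫ = 0) := by
  exact ⟨fun _ _ _ _ h₁ h₂ => sub_conj_mul_inner_eq_zero hH hΘ h₁ h₂,
    fun _ _ _ _ h₁ h₂ => sub_conj_mul_inner_eq_zero hΘ hH h₁ h₂⟩
end

section
/- Fix T > 0, E ∈ ℝ, κ ≥ 0, ω2 ∈ ℂ, and continuous functions V, Ψ : ℝ → ℝ with V(x + T) = V(x) and Ψ(x + T) = −Ψ(x) for all x. Then there exist σ ∈ ℂ with σ ≠ 0 and differentiable functions R₁, R₀, η₁, η₀, W₁, W₀ : ℝ → ℂ, not all identically zero, satisfying for all x the first-order linear system R₁' = (2(V(x) − E) + κ)·R₀ − 2ω2·η₀ + 2Ψ(x)·W₀, R₀' = R₁, η₁' = −2R₀ + (2(V(x) − E) + κ)·η₀, η₀' = η₁, W₁' = 2Ψ(x)·R₀ + κ·W₀, W₀' = W₁, together with the twisted Bloch condition: R₁(x+T) = σ·R₁(x), R₀(x+T) = σ·R₀(x), η₁(x+T) = σ·η₁(x), η₀(x+T) = σ·η₀(x), W₁(x+T) = −σ·W₁(x), W₀(x+T)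 = −σ·W₀(x) for all x. -/
/-!
The system is `y' = A(x) y` on `ℂ⁶`, with `M A(x + T) = A(x) M` for `M = diag(1,1,1,1,-1,-1)`: the
sign picked up by the entries `2Ψ`, which couple the wave function to the potential block, is exactly the one produced by `M`. Hence `y ↦ M y(· + T)` maps the space `S` of global
solutions into itself. By uniqueness, evaluation at `0` embeds `S` in `ℂ⁶`, and by global existence
`S ≠ 0`, so this endomorphism has an eigenvalue `σ`; it is injective, so `σ ≠ 0`. An eigenvector is
the required solution, since `M² = 1`.

Global existence (`exists_global_solution`) follows from the contraction principle in a single step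
on all of `ℝ`: `A` is `2T`-periodic and continuous, hence bounded, and Picard's integral operator is
a contraction for the sup norm with weight `1 / cosh (c t)` once `c` exceeds the Lipschitz constant.
The abstract Floquet argument is `exists_twisted_bloch_solution`.
-/

open scoped NNReal BoundedContinuousFunction

/-- Global existence for a continuous vector field that is Lipschitz in space, uniformly in time.
The assumption `f t 0 = 0` makes Picard's operator preserve the functions of growth
`O(cosh (c t))`. -/
theorem exists_global_solution {E : Type*} [NormedAddCommGroup E] [NormedSpace ℝ E]
    [CompleteSpace E] {f : ℝ → E → E} {K : ℝ≥0} (hf : Continuous fun p : ℝ × E => f p.1 p.2)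
    (hK : ∀ t, LipschitzWith K (f t)) (hf0 : ∀ t, f t 0 = 0) (y₀ : E) :
    ∃ y : ℝ → E, y 0 = y₀ ∧ ∀ t, HasDerivAt y (f t (y t)) t := by
  -- Any `c > K` would do; this choice gives the contraction constant `K / c ≤ 1 / 2`.
  set c : ℝ := 2 * K + 1 with hc
  have hK0 : (0 : ℝ) ≤ K := K.2
  have hc0 : 0 < c := by positivity
  have hcosh : ∀ t : ℝ, 0 < Real.cosh (c * t) := fun t => Real.cosh_pos _
  have hintegral : ∀ t : ℝ, |∫ s in (0 : ℝ)..t, Real.cosh (c * s)| ≤ c⁻¹ * Real.cosh (c * t) := by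
    intro t
    have h : ∀ s ∈ Set.uIcc 0 t,
        HasDerivAt (fun s => c⁻¹ * Real.sinh (c * s)) (Real.cosh (c * s)) s := fun s _ => by
      refine ((((hasDerivAt_id s).const_mul c).sinh).const_mul c⁻¹).congr_deriv ?_
      simp only [id_eq, mul_one]
      field_simp
    rw [intervalIntegral.integral_eq_sub_of_hasDerivAt h
      (Continuous.intervalIntegrable (by fun_prop) _ _)]
    simp only [mul_zero, Real.sinh_zero, sub_zero, abs_mul, abs_of_pos (inv_pos.2 hc0)]
    gcongr
    rw [Real.abs_sinh, ← Real.cosh_abs]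
    exact (Real.sinh_lt_cosh _).le
  have hcont : ∀ z : ℝ →ᵇ E, Continuous fun s => f s (Real.cosh (c * s) • z s) := fun z =>
    hf.comp (continuous_id.prodMk ((by fun_prop : Continuous fun s : ℝ =>
      Real.cosh (c * s)).smul z.continuous))
  have hint : ∀ z : ℝ →ᵇ E, ∀ t, IntervalIntegrable
      (fun s => f s (Real.cosh (c * s) • z s)) MeasureTheory.volume 0 t :=
    fun z t => (hcont z).intervalIntegrable _ _
  -- Serves both for the contraction estimate and, with `w = 0`, for boundedness of the image.
  have hdiff : ∀ z w : ℝ →ᵇ E, ∀ t, (Real.cosh (c * t))⁻¹ *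
      ‖(∫ s in (0 : ℝ)..t, f s (Real.cosh (c * s) • z s)) -
        ∫ s in (0 : ℝ)..t, f s (Real.cosh (c * s) • w s)‖ ≤ 1 / 2 * dist z w := by
    intro z w t
    have hb : ‖(∫ s in (0 : ℝ)..t, f s (Real.cosh (c * s) • z s)) -
        ∫ s in (0 : ℝ)..t, f s (Real.cosh (c * s) • w s)‖ ≤
        |∫ s in (0 : ℝ)..t, K * dist z w * Real.cosh (c * s)| := by
      rw [← intervalIntegral.integral_sub (hint z t) (hint w t)]
      refine intervalIntegral.norm_integral_le_abs_of_norm_le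
        (Filter.Eventually.of_forall fun s => ?_)
        (Continuous.intervalIntegrable (by fun_prop) _ _)
      rw [← dist_eq_norm]
      refine ((hK s).dist_le_mul _ _).trans ?_
      rw [dist_smul₀, Real.norm_of_nonneg (hcosh s).le, mul_assoc, mul_comm (dist z w)]
      have := BoundedContinuousFunction.dist_coe_le_dist (f := z) (g := w) s
      have := (hcosh s).le
      gcongr
    rw [intervalIntegral.integral_const_mul, abs_mul, abs_of_nonneg (by positivity)] at hb
    rw [inv_mul_le_iff₀ (hcosh t)]
    have hcK : K * c⁻¹ ≤ 1 / 2 := by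
      rw [← div_eq_mul_inv, div_le_iff₀ hc0, hc]; linarith
    calc _ ≤ K * dist z w * (c⁻¹ * Real.cosh (c * t)) :=
          hb.trans (by gcongr; exact hintegral t)
      _ = K * c⁻¹ * (Real.cosh (c * t) * dist z w) := by ring
      _ ≤ 1 / 2 * (Real.cosh (c * t) * dist z w) := by
          have := (hcosh t).le
          gcongr
      _ = _ := by ring
  -- Picard's operator in the unknown `z = y / cosh (c t)`, which ranges over bounded functions.
  have hF : ∀ z : ℝ →ᵇ E, ∃ w : ℝ →ᵇ E, ∀ t, w t =
      (Real.cosh (c * t))⁻¹ • (y₀ + ∫ s in (0 : ℝ)..t, f s (Real.cosh (c * s) • z s)) := by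
    intro z
    refine ⟨BoundedContinuousFunction.ofNormedAddCommGroup _ ?_ (‖y₀‖ + 1 / 2 * dist z 0) ?_,
      fun t => rfl⟩
    · exact (Continuous.inv₀ (by fun_prop) fun t => (hcosh t).ne').smul
        (continuous_const.add (intervalIntegral.continuous_primitive
          (fun a b => (hcont z).intervalIntegrable a b) 0))
    · intro t
      have h := hdiff z 0 t
      simp only [BoundedContinuousFunction.coe_zero, Pi.zero_apply, smul_zero, hf0,
        intervalIntegral.integral_zero, sub_zero] at h
      change ‖(Real.cosh (c * t))⁻¹ • (y₀ + _)‖ ≤ _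
      rw [smul_add]
      refine (norm_add_le _ _).trans (add_le_add ?_ ?_)
      · rw [norm_smul, Real.norm_of_nonneg (inv_pos.2 (hcosh t)).le]
        exact mul_le_of_le_one_left (norm_nonneg _) (inv_le_one_of_one_le₀ (Real.one_le_cosh _))
      · rwa [norm_smul, Real.norm_of_nonneg (inv_pos.2 (hcosh t)).le]
  choose F hF using hF
  have hcontr : ContractingWith (1 / 2) F := by
    refine ⟨by norm_num, LipschitzWith.of_dist_le_mul fun z w => ?_⟩
    rw [BoundedContinuousFunction.dist_le (by positivity)]
    intro t
    rw [hF, hF, dist_smul₀, dist_add_left, dist_eq_norm,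
      Real.norm_of_nonneg (inv_pos.2 (hcosh t)).le]
    simpa using hdiff z w t
  set z := ContractingWith.fixedPoint F hcontr
  have hz : F z = z := hcontr.fixedPoint_isFixedPt
  have hy : ∀ t, Real.cosh (c * t) • z t =
      y₀ + ∫ s in (0 : ℝ)..t, f s (Real.cosh (c * s) • z s) := by
    intro t
    conv_lhs => rw [← hz, hF, smul_inv_smul₀ (hcosh t).ne']
  refine ⟨fun t => Real.cosh (c * t) • z t, by simpa using hy 0, fun t => ?_⟩
  have := ((hcont z).integral_hasStrictDerivAt 0 t).hasDerivAt.const_add y₀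
  exact this.congr_of_eventuallyEq (Filter.Eventually.of_forall hy)

/-- **Floquet's theorem with a twist**: if `M A(x + T) = A(x) M` with `M` injective, then `y' = A y`
has a nonzero solution with `M y(x + T) = σ y(x)` and `σ ≠ 0`. Periodicity of `A` serves only to bound
`‖A‖`; its period is unrelated to `T`. -/
theorem exists_twisted_bloch_solution {E : Type*} [NormedAddCommGroup E] [NormedSpace ℂ E]
    [FiniteDimensional ℂ E] [Nontrivial E] {A : ℝ → E →L[ℂ] E} {P T : ℝ}
    (hA : Continuous A) (hP : P ≠ 0) (hper : Function.Periodic A P) {M : E →L[ℂ] E}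
    (hM : Function.Injective M) (hAM : ∀ x v, M (A (x + T) v) = A x (M v)) :
    ∃ (σ : ℂ) (y : ℝ → E), σ ≠ 0 ∧ y ≠ 0 ∧ (∀ t, HasDerivAt y (A t (y t)) t) ∧
      ∀ t, M (y (t + T)) = σ • y t := by
  have : CompleteSpace E := FiniteDimensional.complete ℂ E
  obtain ⟨C, hC⟩ := (hper.isBounded_of_continuous hP hA).exists_norm_le
  have hK : ∀ t, LipschitzWith C.toNNReal (A t) := fun t =>
    ((A t).lipschitz).weaken (by
      rw [← norm_toNNReal]; exact Real.toNNReal_le_toNNReal (hC _ ⟨t, rfl⟩))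
  let S : Submodule ℂ (ℝ → E) :=
    { carrier := {y | ∀ t, HasDerivAt y (A t (y t)) t}
      zero_mem' := fun t => by simp
      add_mem' := fun {y z} hy hz t => by simpa using (hy t).add (hz t)
      smul_mem' := fun a y hy t => by simpa using (hy t).const_smul a }
  have hinj : Function.Injective ((LinearMap.proj (0 : ℝ)).comp S.subtype : S →ₗ[ℂ] E) := by
    intro y z h
    exact Subtype.ext (ODE_solution_unique_univ (v := fun t v => A t v) (s := fun _ => Set.univ)
      (fun t => (hK t).lipschitzOnWith) (fun t => ⟨y.2 t, trivial⟩) (fun t => ⟨z.2 t, trivial⟩) h)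
  have : FiniteDimensional ℂ S := FiniteDimensional.of_injective _ hinj
  have : Nontrivial S := by
    obtain ⟨v, hv⟩ := exists_ne (0 : E)
    obtain ⟨y, hy0, hy⟩ := exists_global_solution (f := fun t v => A t v)
      (by fun_prop) hK (fun t => by simp) v
    refine ⟨⟨y, hy⟩, 0, fun h => hv ?_⟩
    rw [← hy0]
    exact congrFun (congrArg Subtype.val h) 0
  let Φ : Module.End ℂ S :=
    { toFun := fun y => ⟨fun t => M (y.1 (t + T)), fun t => by
        rw [← hAM]
        exact (M.restrictScalars ℝ).hasFDerivAt.comp_hasDerivAt t ((y.2 (t + T)).comp_add_const t T)⟩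
      map_add' := fun y z => Subtype.ext (funext fun t => by simp)
      map_smul' := fun a y => Subtype.ext (funext fun t => by simp) }
  obtain ⟨σ, hσ⟩ := Module.End.exists_eigenvalue Φ
  obtain ⟨y, hy⟩ := hσ.exists_hasEigenvector
  have hyσ : ∀ t, M (y.1 (t + T)) = σ • y.1 t := fun t =>
    congrFun (congrArg Subtype.val hy.apply_eq_smul) t
  have hy0 : y.1 ≠ 0 := fun h => hy.2 (Subtype.ext h)
  refine ⟨σ, y.1, ?_, hy0, y.2, hyσ⟩
  rintro rfl
  refine hy0 (funext fun t => hM ?_)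
  simpa using hyσ (t - T)

/-- The coefficient matrix of the linearized Schrödinger–Poisson system, with unknowns ordered as
`(R₁, R₀, η₁, η₀, W₁, W₀)`; here `p = 2(V - E) + κ` and `q = Ψ` are the values at a given point. -/
def spMatrix (κ ω2 p q : ℂ) : Matrix (Fin 6) (Fin 6) ℂ :=
  !![0, p, 0, -2 * ω2, 0, 2 * q;
     1, 0, 0, 0, 0, 0;
     0, -2, 0, p, 0, 0;
     0, 0, 1, 0, 0, 0;
     0, 2 * q, 0, 0, 0, κ;
     0, 0, 0, 0, 1, 0]

/-- The twist `M = diag(1,1,1,1,-1,-1)`. -/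
def twist : Matrix (Fin 6) (Fin 6) ℂ := Matrix.diagonal ![1, 1, 1, 1, -1, -1]

theorem twist_mul_self : twist * twist = 1 := by
  rw [twist, Matrix.diagonal_mul_diagonal, ← Matrix.diagonal_one]
  congr 1
  ext i
  fin_cases i <;> simp

theorem twist_mul_spMatrix (κ ω2 p q : ℂ) :
    twist * spMatrix κ ω2 p (-q) = spMatrix κ ω2 p q * twist := by
  ext i j
  rw [twist, Matrix.diagonal_mul, Matrix.mul_diagonal]
  fin_cases i <;> fin_cases j <;> simp [spMatrix]

/-- A matrix as a continuous linear endomorphism of `ℂ⁶`, linearly in the matrix. -/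
noncomputable def matCLM : Matrix (Fin 6) (Fin 6) ℂ →ₗ[ℂ] ((Fin 6 → ℂ) →L[ℂ] (Fin 6 → ℂ)) :=
  (LinearMap.toContinuousLinearMap.toLinearMap).comp (Matrix.toLin').toLinearMap

theorem matCLM_apply (B : Matrix (Fin 6) (Fin 6) ℂ) (v : Fin 6 → ℂ) :
    matCLM B v = B.mulVec v := rfl


/-- Proposition B.1 (generalized Bloch/Floquet theorem for the linearized
Schrödinger–Poisson system Eq. (B1)): with a `T`-periodic background potential `V`
and a `T`-anti-periodic background wave function `Ψ`, there exist a nonzero Floquet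
multiplier `σ` and a nontrivial solution `(R₁,R₀,η₁,η₀,W₁,W₀)` of the first-order
system which is `σ`-Bloch-periodic in the wave-function components and
`(−σ)`-Bloch-periodic in the perturbed-potential components. -/
theorem generalized_bloch_theorem
    (T : ℝ) (hT : 0 < T) (E κ : ℝ) (hκ : 0 ≤ κ) (ω2 : ℂ)
    (V Ψ : ℝ → ℝ) (hV : Continuous V) (hΨ : Continuous Ψ)
    (hVper : ∀ x, V (x + T) = V x) (hΨanti : ∀ x, Ψ (x + T) = -Ψ x) :
    ∃ (σ : ℂ) (R₁ R₀ η₁ η₀ W₁ W₀ : ℝ → ℂ),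
      σ ≠ 0 ∧
      Differentiable ℝ R₁ ∧ Differentiable ℝ R₀ ∧
      Differentiable ℝ η₁ ∧ Differentiable ℝ η₀ ∧
      Differentiable ℝ W₁ ∧ Differentiable ℝ W₀ ∧
      ¬ (R₁ = 0 ∧ R₀ = 0 ∧ η₁ = 0 ∧ η₀ = 0 ∧ W₁ = 0 ∧ W₀ = 0) ∧
      (∀ x, deriv R₁ x =
        ((2 * (V x - E) + κ : ℝ) : ℂ) * R₀ x - 2 * ω2 * η₀ x + 2 * (Ψ x : ℂ) * W₀ x) ∧
      (∀ x, deriv R₀ x = R₁ x) ∧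
      (∀ x, deriv η₁ x = -2 * R₀ x + ((2 * (V x - E) + κ : ℝ) : ℂ) * η₀ x) ∧
      (∀ x, deriv η₀ x = η₁ x) ∧
      (∀ x, deriv W₁ x = 2 * (Ψ x : ℂ) * R₀ x + (κ : ℂ) * W₀ x) ∧
      (∀ x, deriv W₀ x = W₁ x) ∧
      (∀ x, R₁ (x + T) = σ * R₁ x) ∧
      (∀ x, R₀ (x + T) = σ * R₀ x) ∧
      (∀ x, η₁ (x + T) = σ * η₁ x) ∧
      (∀ x, η₀ (x + T) = σ * η₀ x) ∧
      (∀ x, W₁ (x + T) = -σ * W₁ x) ∧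
      (∀ x, W₀ (x + T) = -σ * W₀ x) := by
  have hmat : Continuous fun x =>
      spMatrix κ ω2 ((2 * (V x - E) + κ : ℝ) : ℂ) (Ψ x : ℂ) := by
    refine continuous_matrix fun i j => ?_
    fin_cases i <;> fin_cases j <;> simp [spMatrix] <;> fun_prop
  obtain ⟨σ, y, hσ, hy0, hy, hyσ⟩ := exists_twisted_bloch_solution
    (A := fun x => matCLM (spMatrix κ ω2 ((2 * (V x - E) + κ : ℝ) : ℂ) (Ψ x : ℂ)))
    (P := T + T) (T := T) (M := matCLM twist)
    ((LinearMap.continuous_of_finiteDimensional matCLM).comp hmat) (by positivity)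
    (fun x => by simp only [← add_assoc, hVper, hΨanti, neg_neg])
    (Function.LeftInverse.injective (g := matCLM twist) fun v => by
      simp [matCLM_apply, Matrix.mulVec_mulVec, twist_mul_self])
    (fun x v => by
      simp only [matCLM_apply, Matrix.mulVec_mulVec, hVper, hΨanti, Complex.ofReal_neg,
        twist_mul_spMatrix])
  have hd : ∀ i x, HasDerivAt (fun t => y t i)
      ((spMatrix κ ω2 ((2 * (V x - E) + κ : ℝ) : ℂ) (Ψ x : ℂ)).mulVec (y x) i) x :=
    fun i x => hasDerivAt_pi.1 (hy x) i
  have hs : ∀ i x, (![1, 1, 1, 1, -1, -1] : Fin 6 → ℂ) i * y (x + T) i = σ * y x i := by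
    intro i x
    have := congrFun (hyσ x) i
    rwa [matCLM_apply, twist, Matrix.mulVec_diagonal] at this
  have hdiff : ∀ i, Differentiable ℝ fun t => y t i := fun i x => (hd i x).differentiableAt
  refine ⟨σ, fun t => y t 0, fun t => y t 1, fun t => y t 2, fun t => y t 3, fun t => y t 4,
    fun t => y t 5, hσ, hdiff 0, hdiff 1, hdiff 2, hdiff 3, hdiff 4, hdiff 5, ?_,
    fun x => (hd 0 x).deriv.trans ?_, fun x => (hd 1 x).deriv.trans ?_,
    fun x => (hd 2 x).deriv.trans ?_, fun x => (hd 3 x).deriv.trans ?_,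
    fun x => (hd 4 x).deriv.trans ?_, fun x => (hd 5 x).deriv.trans ?_,
    fun x => by simpa using hs 0 x, fun x => by simpa using hs 1 x,
    fun x => by simpa using hs 2 x, fun x => by simpa using hs 3 x,
    fun x => by linear_combination -(by simpa using hs 4 x : -y (x + T) 4 = σ * y x 4),
    fun x => by linear_combination -(by simpa using hs 5 x : -y (x + T) 5 = σ * y x 5)⟩
  · rintro ⟨h0, h1, h2, h3, h4, h5⟩
    refine hy0 (funext fun t => funext fun i => ?_)
    fin_cases i
    exacts [congrFun h0 t, congrFun h1 t, congrFun h2 t, congrFun h3 t, congrFun h4 t,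
      congrFun h5 t]
  all_goals
    simp [spMatrix, Matrix.mulVec, dotProduct, Fin.sum_univ_six]
  all_goals ring
end

section
/- For every real r with 0 < r < 1 and all integers i, j ∈ ℤ, the family m ↦ r^(|i − m| + |m − j|) indexed by m ∈ ℤ is summable, and Σ_{m ∈ ℤ} r^(|i − m| + |m − j|) = ( |i − j| + (1 + r²)/(1 − r²) ) · r^{|i − j|}, where |·| denotes the absolute value of an integer (a natural number used as exponent). -/
/-!
By translation, and by exchanging the two endpoints, the sum reduces to the endpoints `0` and
`d = |i - j|`. The `d` points `0 ≤ k < d` contribute `r ^ d` each, while the two half-lines `k ≥ d`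
and `k < 0` give geometric series of ratio `r ^ 2`, with first terms `r ^ d` and `r ^ (d + 2)`.
-/

/-- The sum with endpoints `0` and `d ≥ 0`. -/
lemma hasSum_pow_natAbs_add_natAbs_sub (r : ℝ) (hr0 : 0 < r) (hr1 : r < 1) (d : ℕ) :
    HasSum (fun k : ℤ => r ^ (k.natAbs + (k - d).natAbs))
      (((d : ℝ) + (1 + r ^ 2) / (1 - r ^ 2)) * r ^ d) := by
  have hr2 : r ^ 2 < 1 := pow_lt_one₀ hr0.le hr1 two_ne_zero
  have hne : 1 - r ^ 2 ≠ 0 := by linarith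
  have hg := hasSum_geometric_of_lt_one (sq_nonneg r) hr2
  have hnonneg : HasSum (fun n : ℕ => r ^ ((n : ℤ).natAbs + ((n : ℤ) - d).natAbs))
      (r ^ d * (1 - r ^ 2)⁻¹ + d * r ^ d) := by
    have hfin : ∑ n ∈ Finset.range d, r ^ ((n : ℤ).natAbs + ((n : ℤ) - d).natAbs)
        = d * r ^ d := by
      rw [Finset.sum_congr rfl (g := fun _ => r ^ d), Finset.sum_const, Finset.card_range,
        nsmul_eq_mul]
      intro n hn
      have := Finset.mem_range.mp hn
      congr 1
      omega
    rw [← hfin, ← hasSum_nat_add_iff d]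
    convert! hg.mul_left (r ^ d) using 2 with n
    rw [← pow_mul, ← pow_add]
    congr 1
    omega
  have hneg : HasSum
      (fun n : ℕ => r ^ ((-((n : ℤ) + 1)).natAbs + (-((n : ℤ) + 1) - d).natAbs))
      (r ^ (d + 2) * (1 - r ^ 2)⁻¹) := by
    convert! hg.mul_left (r ^ (d + 2)) using 2 with n
    rw [← pow_mul, ← pow_add]
    congr 1
    omega
  convert HasSum.of_nat_of_neg_add_one (f := fun k : ℤ => r ^ (k.natAbs + (k - d).natAbs))
    hnonneg hneg using 1
  field_simp
  ring

/-- The closed-form geometric summation Eq. (C5) of Appendix C: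
for `0 < r < 1` and integers `i, j`,
`∑_{m ∈ ℤ} r^(|i−m|+|m−j|) = (|i−j| + (1+r²)/(1−r²)) · r^{|i−j|}`. -/
theorem geometric_double_exponent_sum
    (r : ℝ) (hr0 : 0 < r) (hr1 : r < 1) (i j : ℤ) :
    Summable (fun m : ℤ => r ^ ((i - m).natAbs + (m - j).natAbs)) ∧
    ∑' m : ℤ, r ^ ((i - m).natAbs + (m - j).natAbs) =
      (((i - j).natAbs : ℝ) + (1 + r ^ 2) / (1 - r ^ 2)) * r ^ (i - j).natAbs := by
  have key : HasSum (fun m : ℤ => r ^ ((i - m).natAbs + (m - j).natAbs))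
      ((((i - j).natAbs : ℝ) + (1 + r ^ 2) / (1 - r ^ 2)) * r ^ (i - j).natAbs) := by
    -- Taking the smaller endpoint as the origin moves the endpoints to `0` and `|i - j|`.
    rw [← (Equiv.addLeft (min i j)).hasSum_iff]
    convert hasSum_pow_natAbs_add_natAbs_sub r hr0 hr1 (i - j).natAbs using 2 with k
    simp only [Function.comp_apply, Equiv.coe_addLeft]
    congr 1
    omega
  exact ⟨key.summable, key.tsum_eq⟩
end
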